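/- Suppose the rates R_1, …, R_n are sustainable. Then the output r of Algorithm 1 satisfies the Valid Partition Constraint: for every i with 1 ≤ i ≤ n, ∑_{j=1}^n r_{i,j} = R_i. -/

import Mathlib

/-!
Let `c = n - 2`, so that relaying a sub-stream of rate `a` uses up `c * a` of uplink. If row `i` is
assigned completely, it takes exactly `c * R i` from the total residual uplink, so by sustainability
what is left always suffices for the rows still to come. Within a row the inner loop is greedy: a
column that cannot relay the whole remaining rate is saturated, so the loop could run out of columns
only if the residual uplinks of all of them added up to less than `c * R i`.
-/

open Finset

/-- Inner loop of Algorithm 1: processes the column indices `js` in order,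
starting from remaining rate `R'` and residual uplink bandwidths `U`.
For each `j`: if `(n-2)·R' > U j` then `r := U j / (n-2)` else `r := R'`;
then `U j` decreases by `(n-2)·r` and `R'` by `r`; exit early once `R' = 0`.
Returns the assigned row of sub-stream rates and the updated residual uplinks. -/
noncomputable def innerLoop (n : ℕ) : ℝ → (Fin n → ℝ) → List (Fin n) → (Fin n → ℝ) × (Fin n → ℝ)
  | _, U, [] => (fun _ => 0, U)
  | R', U, j :: js =>
      let rij : ℝ := if (n - 2 : ℝ) * R' > U j then U j / (n - 2 : ℝ) else R'
      let U' : Fin n → ℝ := Function.update U j (U j - (n - 2 : ℝ) * rij)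
      if R' - rij = 0 then
        (Function.update (fun _ => (0 : ℝ)) j rij, U')
      else
        let rest := innerLoop n (R' - rij) U' js
        (Function.update rest.1 j rij, rest.2)

/-- Outer loop of Algorithm 1 over the list `is` of row indices, carrying the
rate matrix `r` computed so far and the residual uplinks `U`. -/
noncomputable def outerLoop (n : ℕ) (R : Fin n → ℝ) :
    (Fin n → Fin n → ℝ) → (Fin n → ℝ) → List (Fin n) → (Fin n → Fin n → ℝ) × (Fin n → ℝ)
  | r, U, [] => (r, U)
  | r, U, i :: is =>
      let res := innerLoop n (R i) U (List.finRange n)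
      outerLoop n R (Function.update r i res.1) res.2 is

/-- The matrix of sub-stream rates output by Algorithm 1, with initial
residual uplinks `U j := Cu j - R j` and rows/columns processed in order. -/
noncomputable def algOutput (n : ℕ) (Cu R : Fin n → ℝ) : Fin n → Fin n → ℝ :=
  (outerLoop n R (fun _ _ => 0) (fun j => Cu j - R j) (List.finRange n)).1

/-- `Ustart n Cu R k i` is the residual uplink bandwidth `U_i` after the first `k`
outer-loop iterations of Algorithm 1, i.e. the value `U_i[k+1]` at the start of
(1-indexed) outer-loop iteration `k+1`. -/
noncomputable def Ustart (n : ℕ) (Cu R : Fin n → ℝ) (k : ℕ) : Fin n → ℝ :=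
  (outerLoop n R (fun _ _ => 0) (fun j => Cu j - R j) ((List.finRange n).take k)).2

/-- The rates `R` are sustainable w.r.t. uplink capacities `Cu` and downlink
capacities `Cd`: (1) `R i ≤ Cu i`; (2) `∑_{j ≠ i} R j ≤ Cd i`;
(3) `(n-1)·∑ R ≤ ∑ Cu`. -/
def Sustainable (n : ℕ) (Cu Cd R : Fin n → ℝ) : Prop :=
  (∀ i, R i ≤ Cu i) ∧
  (∀ i : Fin n, ∑ j ∈ Finset.univ.erase i, R j ≤ Cd i) ∧
  ((n : ℝ) - 1) * (∑ i, R i) ≤ ∑ i, Cu i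

section InnerLoop

variable {n : ℕ} {R' : ℝ} {U : Fin n → ℝ} {i j : Fin n} {js : List (Fin n)}

theorem innerLoop_cons_of_le (h : (n - 2 : ℝ) * R' ≤ U j) :
    innerLoop n R' U (j :: js) =
      (Function.update (fun _ ↦ 0) j R', Function.update U j (U j - (n - 2 : ℝ) * R')) := by
  simp [innerLoop, h.not_gt]

theorem innerLoop_cons_of_lt (hU : 0 ≤ U j) (h : U j < (n - 2 : ℝ) * R') :
    innerLoop n R' U (j :: js) =
      let rest := innerLoop n (R' - U j / (n - 2 : ℝ)) (Function.update U j 0) js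
      (Function.update rest.1 j (U j / (n - 2 : ℝ)), rest.2) := by
  have hc : (n - 2 : ℝ) ≠ 0 := left_ne_zero_of_mul (hU.trans_lt h).ne'
  have hrest : R' - U j / (n - 2 : ℝ) ≠ 0 := by
    rw [sub_ne_zero, Ne, eq_div_iff hc, mul_comm]
    exact h.ne'
  simp [innerLoop, h, hrest, mul_div_cancel₀ _ hc]

theorem innerLoop_fst_of_notMem (hi : i ∉ js) : (innerLoop n R' U js).1 i = 0 := by
  induction js generalizing R' U with
  | nil => rfl
  | cons j js ih =>
    obtain ⟨hij, hi⟩ := not_or.mp (List.mem_cons.not.mp hi)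
    simp only [innerLoop]
    split_ifs <;> simp [hij, ih hi]

theorem innerLoop_snd_apply (hjs : js.Nodup) :
    (innerLoop n R' U js).2 i = U i - (n - 2 : ℝ) * (innerLoop n R' U js).1 i := by
  induction js generalizing R' U with
  | nil => simp [innerLoop]
  | cons j js ih =>
    obtain ⟨hj, hnodup⟩ := List.nodup_cons.mp hjs
    simp only [innerLoop]
    obtain rfl | hij := eq_or_ne i j
    · split_ifs <;> simp [ih hnodup, innerLoop_fst_of_notMem hj]
    · split_ifs <;> simp [ih hnodup, hij]

theorem innerLoop_snd_nonneg (hU : 0 ≤ U) : 0 ≤ (innerLoop n R' U js).2 := by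
  induction js generalizing R' U with
  | nil => exact hU
  | cons j js ih =>
    obtain h | h := le_or_gt ((n - 2 : ℝ) * R') (U j)
    · rw [innerLoop_cons_of_le h]
      exact le_update_iff.mpr ⟨sub_nonneg.mpr h, fun k _ ↦ hU k⟩
    · rw [innerLoop_cons_of_lt (hU j) h]
      exact ih (le_update_iff.mpr ⟨le_rfl, fun k _ ↦ hU k⟩)

theorem sum_innerLoop_fst (hjs : js.Nodup) (hne : js ≠ []) (hU : 0 ≤ U)
    (hcap : (n - 2 : ℝ) * R' ≤ (js.map U).sum) : ∑ j, (innerLoop n R' U js).1 j = R' := by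
  induction js generalizing R' U with
  | nil => contradiction
  | cons j js ih =>
    obtain ⟨hj, hnodup⟩ := List.nodup_cons.mp hjs
    rw [List.map_cons, List.sum_cons] at hcap
    obtain h | h := le_or_gt ((n - 2 : ℝ) * R') (U j)
    · simp [innerLoop_cons_of_le h, sum_update_of_mem]
    · have hc : (n - 2 : ℝ) ≠ 0 := left_ne_zero_of_mul ((hU j).trans_lt h).ne'
      have hjs_ne : js ≠ [] := by
        rintro rfl
        rw [List.map_nil, List.sum_nil, add_zero] at hcap
        exact hcap.not_gt h
      have hU' : 0 ≤ Function.update U j 0 := le_update_iff.mpr ⟨le_rfl, fun k _ ↦ hU k⟩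
      have hcap' : (n - 2 : ℝ) * (R' - U j / (n - 2 : ℝ)) ≤
          (js.map (Function.update U j 0)).sum := by
        rw [hnodup.map_update, if_neg hj, mul_sub, mul_div_cancel₀ _ hc]
        linarith
      rw [innerLoop_cons_of_lt (hU j) h, sum_update_of_mem (mem_univ j), sdiff_singleton_eq_erase,
        sum_erase _ (innerLoop_fst_of_notMem hj), ih hnodup hjs_ne hU' hcap', add_sub_cancel]

theorem sum_innerLoop_finRange_fst (hn : n ≠ 0) (hU : 0 ≤ U)
    (hcap : (n - 2 : ℝ) * R' ≤ ∑ j, U j) :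
    ∑ j, (innerLoop n R' U (List.finRange n)).1 j = R' :=
  sum_innerLoop_fst (List.nodup_finRange n) (by simpa using hn) hU (by rwa [← Fin.sum_univ_def])

theorem sum_innerLoop_finRange_snd (hn : n ≠ 0) (hU : 0 ≤ U)
    (hcap : (n - 2 : ℝ) * R' ≤ ∑ j, U j) :
    ∑ j, (innerLoop n R' U (List.finRange n)).2 j = ∑ j, U j - (n - 2 : ℝ) * R' := by
  simp_rw [innerLoop_snd_apply (List.nodup_finRange n), sum_sub_distrib, ← mul_sum,
    sum_innerLoop_finRange_fst hn hU hcap]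

end InnerLoop

section OuterLoop

variable {n : ℕ} {R : Fin n → ℝ} {r : Fin n → Fin n → ℝ} {U : Fin n → ℝ} {i : Fin n}
  {is : List (Fin n)}

theorem outerLoop_fst_of_notMem (hi : i ∉ is) : (outerLoop n R r U is).1 i = r i := by
  induction is generalizing r U with
  | nil => rfl
  | cons k is ih =>
    obtain ⟨hik, hi⟩ := not_or.mp (List.mem_cons.not.mp hi)
    rw [outerLoop, ih hi, Function.update_of_ne hik]

theorem sum_outerLoop_fst (his : is.Nodup) (hi : i ∈ is) (hR : 0 ≤ R) (hU : 0 ≤ U)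
    (hcap : (n - 2 : ℝ) * (is.map R).sum ≤ ∑ j, U j) :
    ∑ j, (outerLoop n R r U is).1 i j = R i := by
  induction is generalizing r U with
  | nil => contradiction
  | cons k is ih =>
    obtain ⟨hk, his⟩ := List.nodup_cons.mp his
    rw [List.map_cons, List.sum_cons] at hcap
    have hn : n ≠ 0 := k.pos.ne'
    have hrow : (n - 2 : ℝ) * R k ≤ ∑ j, U j := by
      have hrest : 0 ≤ (is.map R).sum := List.sum_nonneg (by simpa using fun i _ ↦ hR i)
      -- The factor `n - 2` is negative when `n = 1`.
      obtain hc | hc := le_total (n - 2 : ℝ) 0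
      · exact (mul_nonpos_of_nonpos_of_nonneg hc (hR k)).trans (sum_nonneg fun j _ ↦ hU j)
      · exact (mul_le_mul_of_nonneg_left (le_add_of_nonneg_right hrest) hc).trans hcap
    rw [outerLoop]
    obtain rfl | hi := List.mem_cons.mp hi
    · rw [outerLoop_fst_of_notMem hk, Function.update_self, sum_innerLoop_finRange_fst hn hU hrow]
    · refine ih his hi (innerLoop_snd_nonneg hU) ?_
      rw [sum_innerLoop_finRange_snd hn hU hrow]
      linarith

end OuterLoop

theorem valid_partition_general (n : ℕ) (Cu R : Fin n → ℝ) (hR : ∀ i, 0 ≤ R i)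
    (hle : ∀ i, R i ≤ Cu i) (htotal : ((n : ℝ) - 1) * ∑ i, R i ≤ ∑ i, Cu i) (i : Fin n) :
    ∑ j, algOutput n Cu R i j = R i := by
  have hcap : (n - 2 : ℝ) * ((List.finRange n).map R).sum ≤ ∑ j, (Cu j - R j) := by
    rw [← Fin.sum_univ_def, sum_sub_distrib]
    linarith
  exact sum_outerLoop_fst (List.nodup_finRange n) (List.mem_finRange i) hR
    (fun j ↦ sub_nonneg.mpr (hle j)) hcap

/-- **Proposition 3.** If the rates are sustainable then the output
of Algorithm 1 satisfies the Valid Partition Constraint: every row `i` of the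
rate matrix sums to `R i`. -/
theorem valid_partition (n : ℕ) (hn : 3 ≤ n) (Cu Cd R : Fin n → ℝ)
    (hCu : ∀ i, 0 < Cu i) (hCd : ∀ i, 0 < Cd i) (hR : ∀ i, 0 < R i)
    (hsus : Sustainable n Cu Cd R) :
    ∀ i : Fin n, ∑ j, algOutput n Cu R i j = R i :=
  valid_partition_general n Cu R (fun i ↦ (hR i).le) hsus.1 hsus.2.2
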